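/- arXiv:1902.09599 — 7 statements merged into one kernel-verified Lean document; each statement's English description precedes it below -/
import Mathlib

section
/- For any mask distribution q on M, any two fill-in values τ, τ' ∈ P, and any x : I → ℝ, one has T_{q,τ} x = 0 if and only if T_{q,τ'} x = 0; that is, all the transition operators T_{q,τ}, τ ∈ P, have the same null space. -/
/-!
The null space of `T q τ` is described without reference to `τ`: `T q τ x = 0` iff the marginal
`marg x m` vanishes for every mask `m` with `q m ≠ 0` (`T_eq_zero_iff`).

The marginal of `T q τ x` over a mask `a` is a combination of the marginals of `x` over the masks
`a ⊓ m` (`marg_T`). For `a = ⊤` this recovers `T q τ x` itself and gives the reverse direction. For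
the forward direction, well-founded induction on `a` shows that `marg x a = 0` whenever some mask of positive
weight lies above `a` (`marg_eq_zero_of_T_eq_zero`): the terms with `a ⊓ m < a` vanish by induction,
and what remains is `marg x a v` times the total weight of the masks above `a`, which is positive.
-/

open Finset
open scoped Classical

/-- The transition operator `T_{q,τ}`: for a mask distribution `q` on masks
`Fin n → Bool`, a fill-in value `τ`, and `x : (Fin n → P) → ℝ`,
`(T q τ x) v = ∑_{m} ∑_{u} q m * x u * [f_τ(u, m) = v]`, where the masking
operator is `f_τ(u,m) d = if m d then u d else τ`. -/
noncomputable def T {n : ℕ} {P : Type*} [Fintype P] [DecidableEq P]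
    (q : (Fin n → Bool) → ℝ) (τ : P) (x : (Fin n → P) → ℝ) : (Fin n → P) → ℝ :=
  fun v => ∑ m : Fin n → Bool, ∑ u : Fin n → P,
    q m * x u * (if (fun d => if m d then u d else τ) = v then (1 : ℝ) else 0)

/-- The marginal `x([v]_m) = ∑_{u ∈ [v]_m} x u`, where `u ∈ [v]_m` iff
`u` agrees with `v` on every coordinate observed by the mask `m`. -/
noncomputable def marg {n : ℕ} {P : Type*} [Fintype P] [DecidableEq P]
    (x : (Fin n → P) → ℝ) (m : Fin n → Bool) (v : Fin n → P) : ℝ :=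
  ∑ u : Fin n → P, if (∀ d, m d = true → v d = u d) then x u else 0

theorem marg_T {n : ℕ} {P : Type*} [Fintype P] [DecidableEq P]
    (q : (Fin n → Bool) → ℝ) (τ : P) (x : (Fin n → P) → ℝ) (a : Fin n → Bool) (v : Fin n → P) :
    marg (T q τ x) a v = ∑ m : Fin n → Bool,
      q m * (if ∀ d, a d = true → m d = false → v d = τ then marg x (a ⊓ m) v else 0) := by
  have h1 : marg (T q τ x) a v = ∑ m : Fin n → Bool, ∑ u : Fin n → P,
      q m * (if ∀ d, a d = true → v d = (if m d then u d else τ) then x u else 0) := by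
    have hw : ∀ w : Fin n → P, (if ∀ d, a d = true → v d = w d then T q τ x w else 0) =
        ∑ m : Fin n → Bool, ∑ u : Fin n → P, if (fun d => if m d then u d else τ) = w then
          q m * (if ∀ d, a d = true → v d = w d then x u else 0) else 0 := by
      intro w
      split_ifs <;> simp [T]
    unfold marg
    rw [Finset.sum_congr rfl fun w _ => hw w, Finset.sum_comm]
    refine Finset.sum_congr rfl fun m _ => ?_
    rw [Finset.sum_comm]
    refine Finset.sum_congr rfl fun u _ => ?_
    rw [Finset.sum_ite_eq]
    simp
  rw [h1]
  refine Finset.sum_congr rfl fun m _ => ?_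
  rw [← Finset.mul_sum]
  congr 1
  -- The masked vector agrees with `v` on `a` iff `v = τ` on the hidden part of `a` and
  -- `u = v` on the visible part `a ⊓ m`.
  have h2 : ∀ u : Fin n → P, (∀ d, a d = true → v d = (if m d then u d else τ)) ↔
      (∀ d, a d = true → m d = false → v d = τ) ∧ (∀ d, (a ⊓ m) d = true → v d = u d) := by
    intro u
    rw [← forall_and]
    refine forall_congr' fun d => ?_
    cases ha : a d <;> cases hm : m d <;> simp [ha, hm]
  simp only [h2]
  split_ifs with h
  · exact Finset.sum_congr rfl fun u _ => if_congr (and_iff_right h) rfl rfl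
  · simp [h]

theorem marg_top {n : ℕ} {P : Type*} [Fintype P] [DecidableEq P]
    (x : (Fin n → P) → ℝ) (v : Fin n → P) : marg x ⊤ v = x v := by
  simp [marg, ← funext_iff]

theorem marg_eq_zero_of_T_eq_zero {n : ℕ} {P : Type*} [Fintype P] [DecidableEq P]
    (q : (Fin n → Bool) → ℝ) (hq0 : ∀ m, 0 ≤ q m) (τ : P) (x : (Fin n → P) → ℝ)
    (hT : T q τ x = 0) (a : Fin n → Bool) :
    (∃ m, a ≤ m ∧ q m ≠ 0) → ∀ v, marg x a v = 0 := by
  induction a using WellFoundedLT.induction with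
  | ind a ih =>
    rintro ⟨m₀, ham₀, hm₀⟩ v
    have key := marg_T q τ x a v
    have h0 : marg (T q τ x) a v = 0 := by simp [hT, marg]
    have h1 : ∀ m : Fin n → Bool,
        q m * (if ∀ d, a d = true → m d = false → v d = τ then marg x (a ⊓ m) v else 0)
          = (if a ≤ m then q m else 0) * marg x a v := by
      intro m
      by_cases h : a ≤ m
      · have h' : ∀ d, a d = true → m d = false → v d = τ := by
          intro d had hmd
          have hle := h d
          rw [had, hmd] at hle
          exact absurd (hle rfl) Bool.false_ne_true
        rw [if_pos h', if_pos h, inf_eq_left.mpr h]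
      · have hlt : a ⊓ m < a := inf_lt_left.mpr h
        rw [ih _ hlt ⟨m₀, inf_le_left.trans ham₀, hm₀⟩ v]
        simp [h]
    rw [h0, Finset.sum_congr rfl fun m _ => h1 m, ← Finset.sum_mul] at key
    refine (mul_eq_zero.mp key.symm).resolve_left (ne_of_gt ?_)
    refine Finset.sum_pos' (fun m _ => ?_) ⟨m₀, Finset.mem_univ _, ?_⟩
    · split_ifs
      exacts [hq0 m, le_rfl]
    · rw [if_pos ham₀]
      exact lt_of_le_of_ne (hq0 m₀) hm₀.symm

/-- A description of the null space of `T q τ` that does not involve `τ`. -/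
theorem T_eq_zero_iff {n : ℕ} {P : Type*} [Fintype P] [DecidableEq P]
    (q : (Fin n → Bool) → ℝ) (hq0 : ∀ m, 0 ≤ q m) (τ : P) (x : (Fin n → P) → ℝ) :
    T q τ x = 0 ↔ ∀ m, q m ≠ 0 → ∀ v, marg x m v = 0 := by
  refine ⟨fun h m hm => marg_eq_zero_of_T_eq_zero q hq0 τ x h m ⟨m, le_rfl, hm⟩, fun h => ?_⟩
  funext v
  rw [← marg_top (T q τ x) v, marg_T]
  refine Finset.sum_eq_zero fun m _ => ?_
  by_cases hm : q m = 0
  · simp [hm]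
  · simp [h m hm v]

/-- All transition operators `T_{q,τ}`, `τ ∈ P`, have the same null space. -/
theorem stmt0 {n : ℕ} (hn : 1 ≤ n) {P : Type*} [Fintype P] [Nonempty P] [DecidableEq P]
    (q : (Fin n → Bool) → ℝ) (hq0 : ∀ m, 0 ≤ q m)
    (hq1 : (∑ m : Fin n → Bool, q m) = 1)
    (τ τ' : P) (x : (Fin n → P) → ℝ) :
    T q τ x = 0 ↔ T q τ' x = 0 := by
  rw [T_eq_zero_iff q hq0, T_eq_zero_iff q hq0]
end

section
/- For any mask distribution q on M, any τ₀, τ ∈ P, and any x₁, x₂ : I → ℝ, if T_{q,τ₀} x₁ = T_{q,τ₀} x₂ then T_{q,τ} x₁ = T_{q,τ} x₂. -/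
/-!
Write `x = x₁ - x₂` and let `fiberSum τ₀ x m w` be the total mass of `x` on the vectors which the mask
`m` sends to `w`, so that `T q τ₀ x w = ∑ m, q m * fiberSum τ₀ x m w`. The crux is that
`T q τ₀ x = 0` forces `fiberSum τ₀ x m = 0` for *every* mask with `q m > 0`
(`fiberSum_eq_zero`). As `f_τ(u, m)` depends only on `f_τ₀(u, m)` and `m`, the vector `T q τ x` is a
combination of these fiber sums and vanishes too.

The crux is proved by downward induction on the support `S = {d | v d ≠ τ₀}` of `v`. The fiber
sum at `v` vanishes unless `S ⊆ m`. If `S ⊆ m` and `q m > 0`, then masking by `m` and then by `S` is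
masking by `S`, so `fiberSum τ₀ x S v` is the sum of `fiberSum τ₀ x m w` over the `w` that agree
with `v` on `S`; all such `w ≠ v` have strictly larger support and contribute `0`. Hence all the
fiber sums at `v` over masks `m ⊇ S` in the support of `q` share one value `C`, and `0 = T q τ₀ x v = (∑ m ⊇ S, q m) * C` gives `C = 0` by positivity.
-/

open Finset
open scoped Classical

/-- The masking operator `f_τ(u, m)`. -/
def fill {n : ℕ} {P : Type*} (τ : P) (m : Fin n → Bool) (u : Fin n → P) : Fin n → P :=
  fun d => if m d then u d else τ

/-- The total mass of `x` on the fiber of `f_τ(·, m)` over `w`. -/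
noncomputable def fiberSum {n : ℕ} {P : Type*} [Fintype P]
    (τ : P) (x : (Fin n → P) → ℝ) (m : Fin n → Bool) (w : Fin n → P) : ℝ :=
  ∑ u : Fin n → P, if fill τ m u = w then x u else 0

lemma T_eq_sum_fiberSum {n : ℕ} {P : Type*} [Fintype P] [DecidableEq P]
    (q : (Fin n → Bool) → ℝ) (τ : P) (x : (Fin n → P) → ℝ) (v : Fin n → P) :
    T q τ x v = ∑ m, q m * fiberSum τ x m v := by
  unfold T fiberSum
  refine Finset.sum_congr rfl fun m _ => ?_
  rw [Finset.mul_sum]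
  refine Finset.sum_congr rfl fun u _ => ?_
  by_cases h : fill τ m u = v
  · have hfun : (fun d => if m d then u d else τ) = v := h
    simp [h, hfun]
  · have hfun : ¬ (fun d => if m d then u d else τ) = v := h
    simp [h, hfun]

/-- If masking by `m` with fill value `τ₀` loses nothing relevant to `f_τ(·, k)`, the fiber sums
of `f_τ(·, k)` are sums of those of `f_τ₀(·, m)`. -/
lemma fiberSum_eq_sum {n : ℕ} {P : Type*} [Fintype P]
    (τ₀ τ : P) (x : (Fin n → P) → ℝ) (m k : Fin n → Bool)
    (hk : ∀ u, fill τ k (fill τ₀ m u) = fill τ k u) (v : Fin n → P) :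
    fiberSum τ x k v = ∑ w, if fill τ k w = v then fiberSum τ₀ x m w else 0 := by
  have hw : ∀ w, (if fill τ k w = v then fiberSum τ₀ x m w else 0) =
      ∑ u, if fill τ₀ m u = w then (if fill τ k w = v then x u else 0) else 0 := by
    intro w
    by_cases h : fill τ k w = v <;> simp [h, fiberSum]
  simp only [hw]
  rw [Finset.sum_comm]
  refine Finset.sum_congr rfl fun u _ => ?_
  rw [Finset.sum_ite_eq]
  simp [hk]

/-- A vector annihilated by `T q τ₀` has vanishing fiber sums for every mask of positive
probability. -/
lemma fiberSum_eq_zero {n : ℕ} {P : Type*} [Fintype P] [DecidableEq P]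
    (q : (Fin n → Bool) → ℝ) (hq0 : ∀ m, 0 ≤ q m) (τ₀ : P) (x : (Fin n → P) → ℝ)
    (h : ∀ v, ∑ m, q m * fiberSum τ₀ x m v = 0) (v : Fin n → P) :
    ∀ m, 0 < q m → fiberSum τ₀ x m v = 0 := by
  -- the number of coordinates equal to `τ₀` decreases as the support grows
  induction hN : (univ.filter fun d => v d = τ₀).card using Nat.strong_induction_on
    generalizing v with
  | _ N ih =>
  set S : Fin n → Bool := fun d => decide (v d ≠ τ₀) with hS
  have hnot : ∀ m, ¬ (∀ d, v d ≠ τ₀ → m d = true) → fiberSum τ₀ x m v = 0 := by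
    intro m hm
    push Not at hm
    obtain ⟨d, hd, hmd⟩ := hm
    refine Finset.sum_eq_zero fun u _ => if_neg fun hu => hd ?_
    rw [← hu]
    simp [fill, hmd]
  have hsame : ∀ m, 0 < q m → (∀ d, v d ≠ τ₀ → m d = true) →
      fiberSum τ₀ x m v = fiberSum τ₀ x S v := by
    intro m hqm hm
    rw [fiberSum_eq_sum τ₀ τ₀ x m S, Finset.sum_eq_single v]
    · rw [if_pos]
      funext d
      by_cases hd : v d = τ₀ <;> simp [fill, hS, hd]
    · intro w _ hwv
      split_ifs with hw
      · have hag : ∀ d, v d ≠ τ₀ → w d = v d := by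
          intro d hd
          have := congrFun hw d
          simpa [fill, hS, hd] using this
        refine ih _ ?_ w rfl m hqm
        rw [← hN]
        obtain ⟨d, hd⟩ := Function.ne_iff.mp hwv
        have hvd : v d = τ₀ := by
          by_contra hc
          exact hd (hag d hc)
        refine Finset.card_lt_card (Finset.ssubset_iff_of_subset ?_ |>.mpr ⟨d, ?_, ?_⟩)
        · intro e he
          simp only [Finset.mem_filter, Finset.mem_univ, true_and] at he ⊢
          by_contra hc
          exact hc (hag e hc ▸ he)
        · simp [hvd]
        · simpa [hvd] using hd
      · rfl
    · simp
    · intro u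
      funext d
      by_cases hd : v d = τ₀
      · simp [fill, hS, hd]
      · simp [fill, hS, hd, hm d hd]
  intro m hqm
  by_cases hm : ∀ d, v d ≠ τ₀ → m d = true
  · rw [hsame m hqm hm]
    have hsum : (∑ k, if ∀ d, v d ≠ τ₀ → k d = true then q k else 0) * fiberSum τ₀ x S v = 0 := by
      refine Eq.trans ?_ (h v)
      rw [Finset.sum_mul]
      refine Finset.sum_congr rfl fun k _ => ?_
      rcases (hq0 k).eq_or_lt with hk0 | hk0
      · simp [← hk0]
      · split_ifs with hk
        · rw [hsame k hk0 hk]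
        · rw [hnot k hk]; simp
    have hpos : 0 < ∑ k, if ∀ d, v d ≠ τ₀ → k d = true then q k else 0 := by
      refine Finset.sum_pos' (fun k _ => ?_) ⟨m, Finset.mem_univ m, ?_⟩
      · split_ifs
        · exact hq0 k
        · exact le_rfl
      · rwa [if_pos hm]
    exact (mul_eq_zero.mp hsum).resolve_left hpos.ne'
  · exact hnot m hm

lemma fiberSum_sub {n : ℕ} {P : Type*} [Fintype P] (τ : P) (x₁ x₂ : (Fin n → P) → ℝ)
    (m : Fin n → Bool) (w : Fin n → P) :
    fiberSum τ (x₁ - x₂) m w = fiberSum τ x₁ m w - fiberSum τ x₂ m w := by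
  simp only [fiberSum, ← Finset.sum_sub_distrib]
  refine Finset.sum_congr rfl fun u _ => ?_
  split_ifs <;> simp

/-- If `T_{q,τ₀} x₁ = T_{q,τ₀} x₂` for some fill value `τ₀`, then
`T_{q,τ} x₁ = T_{q,τ} x₂` for every fill value `τ`. -/
theorem stmt1 {n : ℕ} (hn : 1 ≤ n) {P : Type*} [Fintype P] [Nonempty P] [DecidableEq P]
    (q : (Fin n → Bool) → ℝ) (hq0 : ∀ m, 0 ≤ q m)
    (hq1 : (∑ m : Fin n → Bool, q m) = 1)
    (τ₀ τ : P) (x₁ x₂ : (Fin n → P) → ℝ)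
    (h : T q τ₀ x₁ = T q τ₀ x₂) :
    T q τ x₁ = T q τ x₂ := by
  have hz := fiberSum_eq_zero q hq0 τ₀ (x₁ - x₂) (fun v => by
    simp only [fiberSum_sub, mul_sub, Finset.sum_sub_distrib, ← T_eq_sum_fiberSum, h, sub_self])
  funext v
  rw [← sub_eq_zero, T_eq_sum_fiberSum, T_eq_sum_fiberSum, ← Finset.sum_sub_distrib]
  refine Finset.sum_eq_zero fun m _ => ?_
  rw [← mul_sub, ← fiberSum_sub]
  rcases (hq0 m).eq_or_lt with hm | hm
  · simp [← hm]
  · rw [fiberSum_eq_sum τ₀ τ (x₁ - x₂) m m]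
    · simp [hz _ m hm]
    · intro u
      funext d
      by_cases hd : m d <;> simp [fill, hd]
end

section
/- Let q be a mask distribution on M and let p* : I → ℝ be nonnegative. For τ₀, τ₁ ∈ P, the constrained linear system T_{q,τ₀} p = T_{q,τ₀} p* has p* as its unique nonnegative solution (i.e., every nonnegative p : I → ℝ with T_{q,τ₀} p = T_{q,τ₀} p* satisfies p = p*) if and only if the same holds for τ₁. In other words, whether the true data distribution is uniquely recoverable from masked data is independent of the choice of the filled-in value τ. -/
/-!
Write `Π_m^τ` for the pushforward of functions on `I` along `u ↦ f_τ(u, m)`, so that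
`T_{q,τ} = ∑_m q(m) Π_m^τ`. For fixed `τ` these operators satisfy `Π_k Π_m = Π_{k ⊓ m}`.

If `T_{q,τ} x = 0`, then `Π_k^τ x = 0` for every `k` below a mask of positive probability, by
induction on `k` (`maskPush_eq_zero`): in `0 = Π_k T x = ∑_m q(m) Π_{k ⊓ m} x` the terms with
`k ⊓ m < k` vanish by induction, and the others add up to `(∑_{m ≥ k} q(m)) Π_k x`, whose
coefficient is positive. Since `Π_m^{τ₁} = Π_m^{τ₁} Π_m^{τ₀}`, it follows that
`T_{q,τ₀} x = 0` implies `T_{q,τ₁} x = 0` (`T_eq_zero_of_T_eq_zero`). So the kernel of `T_{q,τ}`,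
and with it the solution set of the linear system, does not depend on `τ`.
-/

open Finset
open scoped Classical

/-- The masking operator `f_τ(u, m)`. -/
def maskFill {n : ℕ} {P : Type*} (τ : P) (m : Fin n → Bool) (u : Fin n → P) : Fin n → P :=
  fun d => if m d then u d else τ

/-- The pushforward of a real-valued function on a finite type along `f`, as a linear map:
`v ↦ ∑_{f u = v} x u`. -/
noncomputable def push {I : Type*} [Fintype I] (f : I → I) : (I → ℝ) →ₗ[ℝ] (I → ℝ) where
  toFun x v := ∑ u, if f u = v then x u else 0
  map_add' x y := by
    ext v
    simp only [Pi.add_apply, ← Finset.sum_add_distrib]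
    exact Finset.sum_congr rfl fun u _ => by split_ifs <;> simp
  map_smul' c x := by
    ext v
    simp [Finset.mul_sum]

lemma push_push {I : Type*} [Fintype I] (f g : I → I) (x : I → ℝ) :
    push g (push f x) = push (g ∘ f) x := by
  ext v
  simp only [push, LinearMap.coe_mk, AddHom.coe_mk, Function.comp_apply]
  have h : ∀ w, (if g w = v then ∑ u, (if f u = w then x u else 0) else 0)
      = ∑ u, if f u = w then (if g w = v then x u else 0) else 0 := by
    intro w
    split_ifs <;> simp
  simp_rw [h]
  rw [Finset.sum_comm]
  simp

lemma T_eq_sum {n : ℕ} {P : Type*} [Fintype P] [DecidableEq P]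
    (q : (Fin n → Bool) → ℝ) (τ : P) (x : (Fin n → P) → ℝ) :
    T q τ x = ∑ m, q m • push (maskFill τ m) x := by
  ext v
  simp only [T, push, LinearMap.coe_mk, AddHom.coe_mk, Finset.sum_apply, Pi.smul_apply,
    smul_eq_mul, Finset.mul_sum]
  refine Finset.sum_congr rfl fun m _ => Finset.sum_congr rfl fun u _ => ?_
  change q m * x u * (if maskFill τ m u = v then 1 else 0) = _
  split_ifs <;> simp

lemma maskFill_comp {n : ℕ} {P : Type*} (τ : P) (k m : Fin n → Bool) :
    maskFill τ k ∘ maskFill τ m = maskFill τ (k ⊓ m) := by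
  ext u d
  by_cases hk : k d <;> by_cases hm : m d <;> simp [maskFill, hk, hm]

/-- Refilling the masked coordinates by another value forgets the first fill-in value. -/
lemma maskFill_refill {n : ℕ} {P : Type*} (τ₀ τ₁ : P) (m : Fin n → Bool) :
    maskFill τ₁ m ∘ maskFill τ₀ m = maskFill τ₁ m := by
  ext u d
  by_cases hm : m d <;> simp [maskFill, hm]

/-- A function in the kernel of `T q τ` has vanishing marginals for every mask lying below a mask
of positive probability. -/
lemma maskPush_eq_zero {n : ℕ} {P : Type*} [Fintype P] [DecidableEq P]
    (q : (Fin n → Bool) → ℝ) (hq0 : ∀ m, 0 ≤ q m) (τ : P) (x : (Fin n → P) → ℝ)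
    (hx : T q τ x = 0) (m : Fin n → Bool) (hm : 0 < q m) (k : Fin n → Bool) (hk : k ≤ m) :
    push (maskFill τ k) x = 0 := by
  induction k using WellFoundedLT.induction with
  | ind k ih =>
    have h := congrArg (push (maskFill τ k)) hx
    simp only [T_eq_sum, map_sum, map_smul, push_push, maskFill_comp, map_zero] at h
    have h' : ∀ m' : Fin n → Bool, q m' • push (maskFill τ (k ⊓ m')) x
        = (if k ≤ m' then q m' else 0) • push (maskFill τ k) x := by
      intro m'
      split_ifs with hle
      · rw [inf_eq_left.mpr hle]
      · rw [ih (k ⊓ m') (inf_lt_left.mpr hle) (inf_le_left.trans hk)]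
        simp
    rw [Finset.sum_congr rfl fun m' _ => h' m', ← Finset.sum_smul] at h
    have hpos : 0 < ∑ m' : Fin n → Bool, if k ≤ m' then q m' else 0 := by
      refine Finset.sum_pos' (fun m' _ => ?_) ⟨m, Finset.mem_univ m, ?_⟩
      · split_ifs
        · exact hq0 m'
        · exact le_rfl
      · rwa [if_pos hk]
    exact (smul_eq_zero.mp h).resolve_left hpos.ne'

lemma T_eq_zero_of_T_eq_zero {n : ℕ} {P : Type*} [Fintype P] [DecidableEq P]
    (q : (Fin n → Bool) → ℝ) (hq0 : ∀ m, 0 ≤ q m) (τ₀ τ₁ : P) (x : (Fin n → P) → ℝ)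
    (hx : T q τ₀ x = 0) : T q τ₁ x = 0 := by
  rw [T_eq_sum]
  refine Finset.sum_eq_zero fun m _ => ?_
  rcases (hq0 m).eq_or_lt with h | h
  · rw [← h, zero_smul]
  · rw [← maskFill_refill τ₀ τ₁ m, ← push_push,
      maskPush_eq_zero q hq0 τ₀ x hx m h m le_rfl, map_zero, smul_zero]

lemma T_sub {n : ℕ} {P : Type*} [Fintype P] [DecidableEq P]
    (q : (Fin n → Bool) → ℝ) (τ : P) (x y : (Fin n → P) → ℝ) :
    T q τ (x - y) = T q τ x - T q τ y := by
  simp only [T_eq_sum, map_sub, smul_sub, Finset.sum_sub_distrib]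

lemma T_eq_of_T_eq {n : ℕ} {P : Type*} [Fintype P] [DecidableEq P]
    (q : (Fin n → Bool) → ℝ) (hq0 : ∀ m, 0 ≤ q m) (τ₀ τ₁ : P) (x y : (Fin n → P) → ℝ)
    (h : T q τ₀ x = T q τ₀ y) : T q τ₁ x = T q τ₁ y := by
  rw [← sub_eq_zero, ← T_sub] at h ⊢
  exact T_eq_zero_of_T_eq_zero q hq0 τ₀ τ₁ _ h

/-- Unique recoverability of a nonnegative data distribution from masked data
is independent of the choice of the filled-in value `τ`. -/
theorem stmt2 {n : ℕ} (hn : 1 ≤ n) {P : Type*} [Fintype P] [Nonempty P] [DecidableEq P]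
    (q : (Fin n → Bool) → ℝ) (hq0 : ∀ m, 0 ≤ q m)
    (hq1 : (∑ m : Fin n → Bool, q m) = 1)
    (τ₀ τ₁ : P) (pstar : (Fin n → P) → ℝ) (hpstar : ∀ s, 0 ≤ pstar s) :
    (∀ p : (Fin n → P) → ℝ, (∀ s, 0 ≤ p s) → T q τ₀ p = T q τ₀ pstar → p = pstar) ↔
    (∀ p : (Fin n → P) → ℝ, (∀ s, 0 ≤ p s) → T q τ₁ p = T q τ₁ pstar → p = pstar) := by
  exact ⟨fun h p hp hT => h p hp (T_eq_of_T_eq q hq0 τ₁ τ₀ p pstar hT),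
    fun h p hp hT => h p hp (T_eq_of_T_eq q hq0 τ₀ τ₁ p pstar hT)⟩
end

section
/- (Proposition 1) Let q be a mask distribution on M with support S_q = {m ∈ M : q(m) > 0}. If x₁, x₂ : I → ℝ have the same marginals on all supported masks, i.e., x₁([v]_m) = x₂([v]_m) for every v ∈ I and every m ∈ S_q, then T_{q,τ} x₁ = T_{q,τ} x₂ for every τ ∈ P. -/
/-!
For a fixed mask `m`, the terms of `T q τ x v` add up to either `q m` times the marginal of `x` on
`[v]_m` or zero, according to whether `v` equals `τ` off `m` (`sum_mask_eq_marg`). Masks outside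
the support of `q` contribute zero, so equal marginals on the support give equal images.
-/

open Finset
open scoped Classical

/-- The preimage of `v` under `f_τ(·, m)` is the whole class `[v]_m` when `v` equals `τ` on every
coordinate hidden by `m`, and is empty otherwise; hence the contribution of `m` to `T q τ x v`
depends on `x` only through its marginal. -/
lemma sum_mask_eq_marg {n : ℕ} {P : Type*} [Fintype P] [DecidableEq P]
    (c : ℝ) (τ : P) (x : (Fin n → P) → ℝ) (m : Fin n → Bool) (v : Fin n → P) :
    (∑ u : Fin n → P,
      c * x u * (if (fun d => if m d then u d else τ) = v then (1 : ℝ) else 0)) =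
    if (∀ d, m d = false → v d = τ) then c * marg x m v else 0 := by
  have key : ∀ u : Fin n → P, (fun d => if m d then u d else τ) = v ↔
      (∀ d, m d = false → v d = τ) ∧ (∀ d, m d = true → v d = u d) := by
    intro u
    rw [funext_iff, ← forall_and]
    refine forall_congr' fun d => ?_
    cases m d <;> simp [eq_comm]
  simp only [key]
  split_ifs with hv
  · simp [and_iff_right hv, marg, Finset.mul_sum]
  · simp [hv]

/-- Proposition 1: equal marginals on all supported masks determine `T_{q,τ} x`
for every `τ`. -/
theorem stmt3 {n : ℕ} (hn : 1 ≤ n) {P : Type*} [Fintype P] [Nonempty P] [DecidableEq P]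
    (q : (Fin n → Bool) → ℝ) (hq0 : ∀ m, 0 ≤ q m)
    (hq1 : (∑ m : Fin n → Bool, q m) = 1)
    (x₁ x₂ : (Fin n → P) → ℝ)
    (h : ∀ (v : Fin n → P) (m : Fin n → Bool), 0 < q m → marg x₁ m v = marg x₂ m v)
    (τ : P) :
    T q τ x₁ = T q τ x₂ := by
  funext v
  simp only [T, sum_mask_eq_marg]
  refine Finset.sum_congr rfl fun m _ => ?_
  rcases (hq0 m).eq_or_lt with hm | hm
  · simp [← hm]
  · rw [h v m hm]
end

section
/- Let q be a mask distribution on M and suppose the all-ones mask 𝟙 (the mask with m_d = 1 for every d) satisfies q(𝟙) > 0. Then for every τ ∈ P the transition operator T_{q,τ} is injective; equivalently, the linear system T_{q,τ} p = T_{q,τ} p* has p* as its unique solution, so the data distribution is uniquely recoverable. -/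
/-!
`T q τ` is triangular with positive diagonal with respect to the number of coordinates equal to `τ`.
Masking can only create coordinates equal to `τ`, so if `f_τ(u, m) = v` then either `u = v` or `u`
has strictly fewer such coordinates than `v` (`card_lt_of_mask_eq`). Hence, if `T q τ z = 0` and
`z` vanishes at all points with fewer `τ`-coordinates than `v`, then
`0 = (T q τ z) v = (∑ m, q m * [f_τ(v, m) = v]) * z v`, where the coefficient is at least
`q 𝟙 > 0`; so `z v = 0`, and strong induction gives injectivity.
-/

open Finset
open scoped Classical

/-- A point that is changed by masking has strictly fewer `τ`-coordinates than its image. -/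
lemma card_lt_of_mask_eq {n : ℕ} {P : Type*} [DecidableEq P] {τ : P} {m : Fin n → Bool}
    {u v : Fin n → P} (h : (fun d => if m d then u d else τ) = v) (hne : u ≠ v) :
    #{d | u d = τ} < #{d | v d = τ} := by
  apply Finset.card_lt_card
  have hv : ∀ d, v d = if m d then u d else τ := fun d => (congrFun h d).symm
  refine Finset.ssubset_iff_subset_ne.2 ⟨fun d hd => ?_, fun heq => hne (funext fun d => ?_)⟩
  · simp only [Finset.mem_filter, Finset.mem_univ, true_and] at hd ⊢
    rw [hv d, hd, ite_self]
  · have hd : u d = τ ↔ v d = τ := by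
      simpa using (Finset.ext_iff.1 heq d)
    have hvd := hv d
    split_ifs at hvd with hm
    · exact hvd.symm
    · rw [hd.2 hvd, hvd]

lemma eq_zero_of_T_eq_zero {n : ℕ} {P : Type*} [Fintype P] [DecidableEq P]
    {q : (Fin n → Bool) → ℝ} (hq0 : ∀ m, 0 ≤ q m) (hfull : 0 < q (fun _ => true)) {τ : P}
    {z : (Fin n → P) → ℝ} (hz : T q τ z = 0) : z = 0 := by
  have key : ∀ k : ℕ, ∀ v : Fin n → P, #{d | v d = τ} = k → z v = 0 := by
    intro k
    induction k using Nat.strong_induction_on with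
    | _ k ih =>
      intro v hk
      -- Only `u = v` contributes to `(T q τ z) v`, by the induction hypothesis.
      have hdiag : T q τ z v = (∑ m : Fin n → Bool,
          q m * (if (fun d => if m d then v d else τ) = v then (1 : ℝ) else 0)) * z v := by
        unfold T
        rw [Finset.sum_mul]
        refine Finset.sum_congr rfl fun m _ => ?_
        rw [Finset.sum_eq_single v]
        · ring
        · intro u _ hne
          split_ifs with h
          · rw [ih _ (hk ▸ card_lt_of_mask_eq h hne) u rfl]
            ring
          · ring
        · exact fun h => absurd (Finset.mem_univ v) h
      have hpos : 0 < ∑ m : Fin n → Bool,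
          q m * (if (fun d => if m d then v d else τ) = v then (1 : ℝ) else 0) := by
        refine Finset.sum_pos' (fun m _ => mul_nonneg (hq0 m) ?_)
          ⟨fun _ => true, Finset.mem_univ _, ?_⟩
        · split_ifs <;> norm_num
        · simpa using hfull
      rw [hz] at hdiag
      exact (mul_eq_zero.1 hdiag.symm).resolve_left hpos.ne'
  exact funext fun v => key _ v rfl

/-- If the all-ones mask has positive probability, then `T_{q,τ}` is injective
for every `τ`; equivalently the system `T_{q,τ} p = T_{q,τ} p*` has `p*` as its
unique solution. -/
theorem stmt9 {n : ℕ} (hn : 1 ≤ n) {P : Type*} [Fintype P] [Nonempty P] [DecidableEq P]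
    (q : (Fin n → Bool) → ℝ) (hq0 : ∀ m, 0 ≤ q m)
    (hq1 : (∑ m : Fin n → Bool, q m) = 1)
    (hfull : 0 < q (fun _ => true)) (τ : P) :
    Function.Injective (T q τ) ∧
      ∀ pstar p : (Fin n → P) → ℝ, T q τ p = T q τ pstar → p = pstar := by
  have hinj : Function.Injective (T q τ) := fun x y hxy =>
    sub_eq_zero.1 (eq_zero_of_T_eq_zero hq0 hfull (by rw [T_sub, hxy, sub_self]))
  exact ⟨hinj, fun _ _ h => hinj h⟩
end

section
/- Let q be a mask distribution on M with support S_q, fix τ ∈ P, and for v ∈ I let M_{τ,v} = {m ∈ S_q : v_d = τ for every d with m_d = 0}. If v₀ ∈ I is such that M_{τ,v₀} = {m₀} is a singleton, then for every x : I → ℝ, x([v₀]_{m₀}) = (T_{q,τ} x)(v₀) / q(m₀). -/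
/-! A pair `(m, u)` contributes to `(T q τ x) v₀` only if `f_τ(u, m) = v₀`, which forces `v₀` to be
`τ` wherever `m` vanishes. By the singleton hypothesis, every such mask other than `m₀` has weight
zero, so the outer sum reduces to its `m₀` term. For `m₀`, the condition `f_τ(u, m₀) = v₀` is
exactly `u ∈ [v₀]_{m₀}`, so that term is `q m₀` times the marginal. -/

open Finset
open scoped Classical

/-- Base case of Proposition 2: if `M_{τ,v₀}` is the singleton `{m₀}`, then
`x([v₀]_{m₀}) = (T_{q,τ} x)(v₀) / q(m₀)`. -/
theorem stmt11 {n : ℕ} (hn : 1 ≤ n) {P : Type*} [Fintype P] [Nonempty P] [DecidableEq P]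
    (q : (Fin n → Bool) → ℝ) (hq0 : ∀ m, 0 ≤ q m)
    (hq1 : (∑ m : Fin n → Bool, q m) = 1)
    (τ : P) (v₀ : Fin n → P) (m₀ : Fin n → Bool)
    (hsingle : Finset.univ.filter
        (fun m : Fin n → Bool => 0 < q m ∧ ∀ d, m d = false → v₀ d = τ) = {m₀})
    (x : (Fin n → P) → ℝ) :
    marg x m₀ v₀ = T q τ x v₀ / q m₀ := by
  have hmem : ∀ m, (0 < q m ∧ ∀ d, m d = false → v₀ d = τ) ↔ m = m₀ := fun m => by
    simpa using Finset.ext_iff.mp hsingle m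
  obtain ⟨hpos, hτ⟩ := (hmem m₀).mpr rfl
  rw [eq_div_iff hpos.ne']
  unfold T marg
  rw [Finset.sum_eq_single m₀]
  · rw [Finset.sum_mul]
    refine Finset.sum_congr rfl fun u _ => ?_
    have hiff : (fun d => if m₀ d then u d else τ) = v₀ ↔ ∀ d, m₀ d = true → v₀ d = u d := by
      rw [funext_iff]
      refine forall_congr' fun d => ?_
      cases hd : m₀ d
      · simp [hτ d hd]
      · simp [eq_comm]
    by_cases h : ∀ d, m₀ d = true → v₀ d = u d
    · rw [if_pos h, if_pos (hiff.mpr h)]; ring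
    · rw [if_neg h, if_neg (mt hiff.mp h)]; ring
  · intro m _ hne
    refine Finset.sum_eq_zero fun u _ => ?_
    by_cases h : (fun d => if m d then u d else τ) = v₀
    · have hz : q m = 0 := by
        by_contra hq
        refine hne ((hmem m).mp ⟨lt_of_le_of_ne (hq0 m) (Ne.symm hq), fun d hd => ?_⟩)
        rw [← h]
        simp [hd]
      rw [hz]; ring
    · rw [if_neg h, mul_zero]
  · simp
end

section
/- Let q be a mask distribution on M with support S_q and fix τ ∈ P. A vector x : I → ℝ lies in the null space of the transition operator, T_{q,τ} x = 0, if and only if all of its marginals on supported masks vanish: x([v]_m) = 0 for every v ∈ I and every m ∈ S_q. -/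
/-!
Write `G m w` for the total `x`-mass of the vectors whose masking by `m` is `w` (`fibreSum`).
Then `T x w = ∑ m, q m * G m w`, and the marginals of `x` on `m` are the values of `G m` on masked
vectors, so the claim is that `T x = 0` iff `G m = 0` for every supported `m`.

Only the forward direction has content. It goes by induction on the number of coordinates of `w`
equal to `τ`. Let `O` be the set of coordinates where `w` differs from `τ`, and let `B` be the
marginal of `x` at `w` on `O`. If `m` does not contain `O`, then `G m w = 0`. If `m` is supported
and contains `O`, then `B` is the sum of `G m w'` over all `w'` agreeing with `w` on `O`; every such
`w' ≠ w` has fewer `τ`s, so its term vanishes by induction and `B = G m w`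
(`sum_agree_eq_fibreSum`). Hence `0 = T x w = (∑ q m) * B`, the sum running over the masks
containing `O`. The weights are nonnegative, so either no such mask is supported or `B = 0`.
-/

open Finset
open scoped Classical

/-- The total `x`-mass of the vectors `u` with `f_τ(u, m) = w`. -/
noncomputable def fibreSum {n : ℕ} {P : Type*} [Fintype P] [DecidableEq P]
    (τ : P) (x : (Fin n → P) → ℝ) (m : Fin n → Bool) (w : Fin n → P) : ℝ :=
  ∑ u : Fin n → P, if (fun d => if m d then u d else τ) = w then x u else 0

lemma T_apply_eq_sum_fibreSum {n : ℕ} {P : Type*} [Fintype P] [DecidableEq P]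
    (q : (Fin n → Bool) → ℝ) (τ : P) (x : (Fin n → P) → ℝ) (w : Fin n → P) :
    T q τ x w = ∑ m, q m * fibreSum τ x m w := by
  simp only [T, fibreSum, Finset.mul_sum]
  refine Finset.sum_congr rfl fun m _ => Finset.sum_congr rfl fun u _ => ?_
  split_ifs <;> simp

lemma marg_eq_fibreSum {n : ℕ} {P : Type*} [Fintype P] [DecidableEq P]
    (τ : P) (x : (Fin n → P) → ℝ) (m : Fin n → Bool) (v : Fin n → P) :
    marg x m v = fibreSum τ x m (fun d => if m d then v d else τ) := by
  unfold marg fibreSum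
  refine Finset.sum_congr rfl fun u _ => ?_
  have h : (∀ d, m d = true → v d = u d) ↔
      (fun d => if m d then u d else τ) = (fun d => if m d then v d else τ) := by
    rw [funext_iff]
    refine forall_congr' fun d => ?_
    by_cases hd : m d = true <;> simp [hd, eq_comm]
  simp only [h]

lemma fibreSum_eq_zero_of_not_subset {n : ℕ} {P : Type*} [Fintype P] [DecidableEq P]
    (τ : P) (x : (Fin n → P) → ℝ) (m : Fin n → Bool) (w : Fin n → P)
    (h : ¬ ∀ d, w d ≠ τ → m d = true) : fibreSum τ x m w = 0 := by
  unfold fibreSum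
  refine Finset.sum_eq_zero fun u _ => if_neg fun hu => h fun d hd => ?_
  by_contra hm
  apply hd
  rw [← hu]
  simp [hm]

/-- Partitioning the vectors that agree with `w` wherever `w ≠ τ` by their masking under `m`: if
every part other than that of `w` has zero mass, their total mass is that of the part of `w`. -/
lemma sum_agree_eq_fibreSum {n : ℕ} {P : Type*} [Fintype P] [DecidableEq P]
    (τ : P) (x : (Fin n → P) → ℝ) (m : Fin n → Bool) (w : Fin n → P)
    (h : ∀ d, w d ≠ τ → m d = true)
    (hz : ∀ w' : Fin n → P, (∀ d, w d ≠ τ → w' d = w d) → w' ≠ w → fibreSum τ x m w' = 0) :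
    (∑ u : Fin n → P, if (∀ d, w d ≠ τ → u d = w d) then x u else 0) = fibreSum τ x m w := by
  have key : (∑ u : Fin n → P, if (∀ d, w d ≠ τ → u d = w d) then x u else 0)
      = ∑ w' : Fin n → P, if (∀ d, w d ≠ τ → w' d = w d) then fibreSum τ x m w' else 0 := by
    have e : ∀ w' : Fin n → P,
        (if (∀ d, w d ≠ τ → w' d = w d) then fibreSum τ x m w' else 0)
        = ∑ u : Fin n → P, if (fun d => if m d then u d else τ) = w' then
            (if (∀ d, w d ≠ τ → w' d = w d) then x u else 0) else 0 := by
      intro w'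
      unfold fibreSum
      split_ifs <;> simp
    simp only [e]
    rw [Finset.sum_comm]
    refine Finset.sum_congr rfl fun u _ => ?_
    rw [Finset.sum_ite_eq]
    -- `w ≠ τ` only on coordinates kept by `m`, so masking does not affect agreement with `w`.
    have hiff : (∀ d, w d ≠ τ → u d = w d) ↔
        (∀ d, w d ≠ τ → (if m d then u d else τ) = w d) := by
      refine forall_congr' fun d => ?_
      by_cases hd : w d = τ
      · simp [hd]
      · simp [h d hd]
    simp only [hiff, Finset.mem_univ, if_true]
  rw [key, Finset.sum_eq_single w]
  · simp
  · intro w' _ hne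
    split_ifs with hw
    · exact hz w' hw hne
    · rfl
  · simp

lemma fibreSum_eq_zero_of_T_eq_zero {n : ℕ} {P : Type*} [Fintype P] [DecidableEq P]
    (q : (Fin n → Bool) → ℝ) (hq0 : ∀ m, 0 ≤ q m) (τ : P) (x : (Fin n → P) → ℝ)
    (hT : T q τ x = 0) (k : ℕ) :
    ∀ w : Fin n → P, (Finset.univ.filter fun d => w d = τ).card = k →
      ∀ m, 0 < q m → fibreSum τ x m w = 0 := by
  induction k using Nat.strong_induction_on with
  | _ k ih =>
    intro w hk m hm
    by_cases hsub : ∀ d, w d ≠ τ → m d = true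
    swap
    · exact fibreSum_eq_zero_of_not_subset τ x m w hsub
    have hB : ∀ m', 0 < q m' → (∀ d, w d ≠ τ → m' d = true) →
        (∑ u : Fin n → P, if (∀ d, w d ≠ τ → u d = w d) then x u else 0)
          = fibreSum τ x m' w := by
      intro m' hm' hsub'
      refine sum_agree_eq_fibreSum τ x m' w hsub' fun w' hw' hne => ?_
      refine ih _ ?_ w' rfl m' hm'
      rw [← hk]
      refine Finset.card_lt_card (Finset.ssubset_iff_of_subset ?_ |>.2 ?_)
      · intro d hd
        simp only [Finset.mem_filter, Finset.mem_univ, true_and] at hd ⊢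
        by_contra hwd
        exact hwd ((hw' d hwd).symm.trans hd)
      · obtain ⟨d, hd⟩ := Function.ne_iff.1 hne
        have hwd : w d = τ := by
          by_contra hwd
          exact hd (hw' d hwd)
        refine ⟨d, by simp [hwd], ?_⟩
        simpa [← hwd] using hd
    have hTw := congrFun hT w
    rw [T_apply_eq_sum_fibreSum] at hTw
    set B := ∑ u : Fin n → P, if (∀ d, w d ≠ τ → u d = w d) then x u else 0 with hBdef
    have hsum : (∑ m', if (∀ d, w d ≠ τ → m' d = true) then q m' else 0) * B = 0 := by
      rw [Finset.sum_mul]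
      refine Eq.trans (Finset.sum_congr rfl fun m' _ => ?_) hTw
      split_ifs with hs
      · rcases (hq0 m').eq_or_lt with h0 | hpos
        · simp [← h0]
        · rw [hB m' hpos hs]
      · rw [fibreSum_eq_zero_of_not_subset τ x m' w hs]
        simp
    have hpos : 0 < ∑ m', if (∀ d, w d ≠ τ → m' d = true) then q m' else 0 := by
      refine Finset.sum_pos' (fun m' _ => ?_) ⟨m, Finset.mem_univ _, ?_⟩
      · split_ifs
        · exact hq0 m'
        · exact le_rfl
      · rwa [if_pos hsub]
    rw [← hB m hm hsub]
    exact (mul_eq_zero.1 hsum).resolve_left hpos.ne'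

/-- `x` lies in the null space of `T_{q,τ}` iff all of its marginals on
supported masks vanish. -/
theorem stmt13 {n : ℕ} (hn : 1 ≤ n) {P : Type*} [Fintype P] [Nonempty P] [DecidableEq P]
    (q : (Fin n → Bool) → ℝ) (hq0 : ∀ m, 0 ≤ q m)
    (hq1 : (∑ m : Fin n → Bool, q m) = 1)
    (τ : P) (x : (Fin n → P) → ℝ) :
    T q τ x = 0 ↔
      ∀ (v : Fin n → P) (m : Fin n → Bool), 0 < q m → marg x m v = 0 := by
  constructor
  · intro hT v m hm
    rw [marg_eq_fibreSum τ]
    exact fibreSum_eq_zero_of_T_eq_zero q hq0 τ x hT _ _ rfl m hm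
  · intro h
    funext w
    rw [T_apply_eq_sum_fibreSum]
    refine Finset.sum_eq_zero fun m _ => ?_
    rcases (hq0 m).eq_or_lt with h0 | hpos
    · simp [← h0]
    · by_cases hs : ∀ d, w d ≠ τ → m d = true
      · -- `w` is a fixed point of masking by `m`, so `fibreSum` at `w` is a marginal.
        have hw : (fun d => if m d then w d else τ) = w := by
          funext d
          by_cases hd : w d = τ
          · simp [hd]
          · simp [hs d hd]
        have hmarg := h w m hpos
        rw [marg_eq_fibreSum τ, hw] at hmarg
        simp [hmarg]
      · simp [fibreSum_eq_zero_of_not_subset τ x m w hs]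
end
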